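/- In the superdiffusive regime 3/4 < p < 1, assume S_n/n^{2p−1} → L almost surely and ℙ(L² > 0) > 0. For any α ∈ (0,1), letting t_{1−α/2} be the (1−α/2)-quantile of the standard Gaussian distribution, the conditional coverage probability ℙ( p ∈ [ p̂_n − t_{1−α/2}/√(V_n), p̂_n + t_{1−α/2}/√(V_n) ] ∣ {L² > 0} ) converges to 1 − α as n → ∞. -/

import Mathlib

open MeasureTheory ProbabilityTheory Filter Finset
open scoped BoundedContinuousFunction ENNReal NNReal Topology

noncomputable section

variable {Ω : Type*}

/-- Position of the elephant random walk: `S n = X 1 + ⋯ + X n`. -/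
def erwS (X : ℕ → Ω → ℝ) (n : ℕ) (ω : Ω) : ℝ :=
  ∑ k ∈ Finset.Icc 1 n, X k ω

/-- `V n = 4 ∑_{k=1}^{n-1} (S k / k)²`, the approximate conditional Fisher information. -/
def erwV (X : ℕ → Ω → ℝ) (n : ℕ) (ω : Ω) : ℝ :=
  4 * ∑ k ∈ Finset.Icc 1 (n - 1), (erwS X k ω / k) ^ 2

/-- The quasi-maximum likelihood estimator `p̂ n` of the memory parameter. -/
def erwPhat (X : ℕ → Ω → ℝ) (n : ℕ) (ω : Ω) : ℝ :=
  (∑ k ∈ Finset.Icc 1 (n - 1), (erwS X k ω / k) * (X (k + 1) ω + erwS X k ω / k)) /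
    (2 * ∑ k ∈ Finset.Icc 1 (n - 1), (erwS X k ω / k) ^ 2)

/-- The elephant random walk hypotheses with memory parameter `p ∈ [0,1]`:
the steps take values in `{-1, 1}`, are adapted to the filtration `ℱ`
(which plays the role of `σ(X_1, …, X_n)`), and
`E[X_{n+1} | ℱ_n] = (2p - 1) · S_n / n` almost surely. -/
def IsERW {m0 : MeasurableSpace Ω} (μ : Measure Ω) (ℱ : Filtration ℕ m0)
    (X : ℕ → Ω → ℝ) (p : ℝ) : Prop :=
  0 ≤ p ∧ p ≤ 1 ∧
  (∀ n, 1 ≤ n → ∀ ω, X n ω = 1 ∨ X n ω = -1) ∧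
  (∀ n, 1 ≤ n → Measurable[ℱ n] (X n)) ∧
  (∀ n, 1 ≤ n → μ[X (n + 1) | ℱ n] =ᵐ[μ] fun ω => (2 * p - 1) * (erwS X n ω / n))


/-! ### Deterministic lemmas -/

lemma aux_trunc_sum (a : ℕ → ℝ) (ha : ∀ k, 0 ≤ a k) (c : ℝ) (hc : 0 ≤ c) (n : ℕ) :
    ∑ k ∈ range n, (if ∑ j ∈ range (k + 1), a j ≤ c then a k else 0) ≤ c := by
  induction n with
  | zero => simpa using hc
  | succ n ih =>
    rw [sum_range_succ]
    split_ifs with h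
    · refine le_trans ?_ h
      rw [sum_range_succ]
      gcongr with k hk
      split_ifs
      · exact le_rfl
      · exact ha k
    · simpa using ih

lemma aux_norm_one_add_I (x : ℝ) : ‖(1 + Complex.I * x : ℂ)‖ ≤ Real.exp (x ^ 2 / 2) := by
  have h1 : ‖(1 + Complex.I * x : ℂ)‖ ^ 2 = 1 + x ^ 2 := by
    rw [← Complex.normSq_eq_norm_sq, Complex.normSq_apply]
    simp
    ring
  have h2 : 1 + x ^ 2 ≤ (Real.exp (x ^ 2 / 2)) ^ 2 := by
    rw [← Real.exp_nat_mul]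
    have := Real.add_one_le_exp (x ^ 2)
    have h3 : ((2 : ℕ) : ℝ) * (x ^ 2 / 2) = x ^ 2 := by push_cast; ring
    rw [h3]; linarith
  exact le_of_sq_le_sq (by rw [h1]; exact h2) (Real.exp_pos _).le

lemma aux_norm_prod (s : Finset ℕ) (x : ℕ → ℝ) (B : ℝ) (h : ∑ k ∈ s, x k ^ 2 ≤ B) :
    ‖∏ k ∈ s, (1 + Complex.I * (x k : ℂ))‖ ≤ Real.exp (B / 2) := by
  rw [norm_prod]
  calc ∏ k ∈ s, ‖(1 + Complex.I * (x k : ℂ))‖ ≤ ∏ k ∈ s, Real.exp (x k ^ 2 / 2) :=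
        prod_le_prod (fun _ _ => norm_nonneg _) (fun k _ => aux_norm_one_add_I (x k))
    _ = Real.exp ((∑ k ∈ s, x k ^ 2) / 2) := by rw [← Real.exp_sum, sum_div]
    _ ≤ _ := by gcongr

lemma aux_log_bound (x : ℝ) (hx : |x| ≤ 1 / 2) :
    ‖Complex.log (1 + Complex.I * x) - (Complex.I * x + (x : ℂ) ^ 2 / 2)‖ ≤ |x| ^ 3 := by
  have hn : ‖(Complex.I * x : ℂ)‖ = |x| := by simp
  have h := Complex.norm_log_sub_logTaylor_le 2 (z := Complex.I * x) (by rw [hn]; linarith)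
  have e : Complex.logTaylor (2 + 1) (Complex.I * x) = Complex.I * x + (x : ℂ) ^ 2 / 2 := by
    simp [Complex.logTaylor, sum_range_succ]
    ring_nf
    simp
  rw [e, hn] at h
  refine h.trans ?_
  have h1 : (1 - |x|)⁻¹ ≤ 2 := by
    rw [inv_le_comm₀ (by linarith) (by norm_num)]; linarith
  have h2 : 0 ≤ |x| ^ 3 := by positivity
  norm_num
  nlinarith

lemma aux_prod_eq (s : Finset ℕ) (x : ℕ → ℝ) (δ : ℝ) (hδ : δ ≤ 1 / 2) (hx : ∀ k ∈ s, |x k| ≤ δ) :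
    ∃ R : ℂ, ‖R‖ ≤ δ * ∑ k ∈ s, x k ^ 2 ∧
      ∏ k ∈ s, (1 + Complex.I * (x k : ℂ)) =
        Complex.exp (Complex.I * ((∑ k ∈ s, x k : ℝ) : ℂ)) *
          Complex.exp (((∑ k ∈ s, x k ^ 2 : ℝ) : ℂ) / 2 + R) := by
  refine ⟨∑ k ∈ s, (Complex.log (1 + Complex.I * x k) - (Complex.I * x k + (x k : ℂ) ^ 2 / 2)),
    ?_, ?_⟩
  · refine (norm_sum_le _ _).trans ?_
    rw [mul_sum]
    refine sum_le_sum fun k hk => (aux_log_bound _ ((hx k hk).trans hδ)).trans ?_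
    rw [← sq_abs (x k)]
    have := hx k hk
    have : 0 ≤ |x k| ^ 2 := by positivity
    nlinarith
  · rw [← Complex.exp_add]
    have : Complex.I * ((∑ k ∈ s, x k : ℝ) : ℂ) + (((∑ k ∈ s, x k ^ 2 : ℝ) : ℂ) / 2 +
        ∑ k ∈ s, (Complex.log (1 + Complex.I * x k) - (Complex.I * x k + (x k : ℂ) ^ 2 / 2))) =
        ∑ k ∈ s, Complex.log (1 + Complex.I * x k) := by
      push_cast
      rw [sum_sub_distrib, sum_add_distrib, mul_sum, sum_div]
      ring
    rw [this, Complex.exp_sum]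
    refine prod_congr rfl fun k hk => (Complex.exp_log ?_).symm
    intro h0
    have := congrArg Complex.re h0
    simp at this

/-- Pathwise McLeish expansion. -/
lemma aux_pathwise (d b : ℕ → ℝ) (u q : ℝ) (hd : ∀ k, |d k| ≤ 2) (hb : Tendsto b atTop atTop)
    (hq : Tendsto (fun n => (∑ k ∈ range n, d k ^ 2) / b n) atTop (𝓝 q)) :
    Tendsto (fun n => Complex.exp (-(u ^ 2 * q / 2 : ℝ)) *
        ∏ k ∈ range n, (1 + Complex.I * ((u * d k / √(b n) : ℝ) : ℂ)) -
      Complex.exp (Complex.I * ((u * ((∑ k ∈ range n, d k) / √(b n)) : ℝ) : ℂ))) atTop (𝓝 0) := by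
  have hs : Tendsto (fun n => √(b n)) atTop atTop := Real.tendsto_sqrt_atTop.comp hb
  have hδ : Tendsto (fun n => |u| * 2 / √(b n)) atTop (𝓝 0) := hs.const_div_atTop _
  have hbpos : ∀ᶠ n in atTop, 0 < b n := hb.eventually_gt_atTop 0
  have hsmall : ∀ᶠ n in atTop, |u| * 2 / √(b n) ≤ 1 / 2 :=
    hδ.eventually (ge_mem_nhds (by norm_num))
  have hx : ∀ n k, |u * d k / √(b n)| ≤ |u| * 2 / √(b n) := by
    intro n k
    rw [abs_div, abs_mul, abs_of_nonneg (Real.sqrt_nonneg _)]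
    gcongr
    exact hd k
  have hex : ∀ n, ∃ R : ℂ, |u| * 2 / √(b n) ≤ 1 / 2 →
      (‖R‖ ≤ (|u| * 2 / √(b n)) * ∑ k ∈ range n, (u * d k / √(b n)) ^ 2 ∧
      ∏ k ∈ range n, (1 + Complex.I * ((u * d k / √(b n) : ℝ) : ℂ)) =
        Complex.exp (Complex.I * ((∑ k ∈ range n, u * d k / √(b n) : ℝ) : ℂ)) *
          Complex.exp (((∑ k ∈ range n, (u * d k / √(b n)) ^ 2 : ℝ) : ℂ) / 2 + R)) := by
    intro n
    by_cases h : |u| * 2 / √(b n) ≤ 1 / 2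
    · obtain ⟨R, hR⟩ := aux_prod_eq (range n) (fun k => u * d k / √(b n)) _ h (fun k _ => hx n k)
      exact ⟨R, fun _ => hR⟩
    · exact ⟨0, fun h' => absurd h' h⟩
  choose R hR using hex
  have hsq : ∀ᶠ n in atTop, ∑ k ∈ range n, (u * d k / √(b n)) ^ 2 =
      u ^ 2 * ((∑ k ∈ range n, d k ^ 2) / b n) := by
    filter_upwards [hbpos] with n hn
    rw [sum_div, mul_sum]
    refine sum_congr rfl fun k _ => ?_
    rw [div_pow, Real.sq_sqrt hn.le]; ring
  have hsqlim : Tendsto (fun n => ∑ k ∈ range n, (u * d k / √(b n)) ^ 2) atTop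
      (𝓝 (u ^ 2 * q)) := (tendsto_congr' hsq).2 (hq.const_mul _)
  have hRlim : Tendsto R atTop (𝓝 0) := by
    refine squeeze_zero_norm' (a := fun n => (|u| * 2 / √(b n)) *
      ∑ k ∈ range n, (u * d k / √(b n)) ^ 2) ?_ ?_
    · filter_upwards [hsmall] with n hn using (hR n hn).1
    · simpa using hδ.mul hsqlim
  have hE : Tendsto (fun n => Complex.exp (-(u ^ 2 * q / 2 : ℝ) +
      (((∑ k ∈ range n, (u * d k / √(b n)) ^ 2 : ℝ) : ℂ) / 2 + R n)) - 1) atTop (𝓝 0) := by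
    have h1 : Tendsto (fun n => ((∑ k ∈ range n, (u * d k / √(b n)) ^ 2 : ℝ) : ℂ)) atTop
      (𝓝 ((u ^ 2 * q : ℝ) : ℂ)) := (Complex.continuous_ofReal.tendsto _).comp hsqlim
    have h2 := ((h1.div_const 2).add hRlim).const_add (-((u ^ 2 * q / 2 : ℝ) : ℂ))
    have h3 := ((Complex.continuous_exp.tendsto _).comp h2).sub_const 1
    have e0 : -((u ^ 2 * q / 2 : ℝ) : ℂ) + (((u ^ 2 * q : ℝ) : ℂ) / 2 + 0) = 0 := by
      push_cast; ring
    rw [e0, Complex.exp_zero, sub_self] at h3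
    exact h3
  refine squeeze_zero_norm' ?_ (tendsto_zero_iff_norm_tendsto_zero.1 hE)
  filter_upwards [hsmall] with n hn
  rw [(hR n hn).2, Complex.exp_add]
  have e1 : (∑ k ∈ range n, u * d k / √(b n)) = u * ((∑ k ∈ range n, d k) / √(b n)) := by
    rw [sum_div, mul_sum]; exact sum_congr rfl fun k _ => by ring
  rw [e1]
  set T := u * ((∑ k ∈ range n, d k) / √(b n))
  have e2 : ∀ A B C : ℂ, A * (C * B) - C = C * (A * B - 1) := by intros; ring
  rw [e2, norm_mul, mul_comm Complex.I, Complex.norm_exp_ofReal_mul_I, one_mul, Complex.exp_add,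
    Complex.exp_add]

/-- Weighted Cesaro averages. -/
lemma aux_toeplitz (w f : ℕ → ℝ) (c : ℝ) (hw : ∀ k, 0 ≤ w k)
    (hb : Tendsto (fun n => ∑ k ∈ range n, w k) atTop atTop) (hf : Tendsto f atTop (𝓝 c)) :
    Tendsto (fun n => (∑ k ∈ range n, f k * w k) / ∑ k ∈ range n, w k) atTop (𝓝 c) := by
  have h1 : (fun k => (f k - c) * w k) =o[atTop] w := by
    have : (fun k => f k - c) =o[atTop] (fun _ => (1 : ℝ)) := by
      rw [Asymptotics.isLittleO_one_iff]
      simpa using hf.sub_const c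
    simpa using this.mul_isBigO (Asymptotics.isBigO_refl w atTop)
  have h2 := h1.sum_range hw hb
  have h3 := h2.tendsto_div_nhds_zero.add_const c
  rw [zero_add] at h3
  refine (tendsto_congr' ?_).1 h3
  filter_upwards [hb.eventually_gt_atTop 0] with n hn
  have : ∑ k ∈ range n, (f k - c) * w k = ∑ k ∈ range n, f k * w k - c * ∑ k ∈ range n, w k := by
    rw [mul_sum, ← sum_sub_distrib]; exact sum_congr rfl fun k _ => by ring
  rw [this]; field_simp; ring

/-! ### Stable martingale central limit theorem -/

/-- Normalised martingale increments, truncated in a predictable way. -/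
def auxTr (y e : ℕ → Ω → ℝ) (b : ℕ → ℝ) (u C : ℝ) (n k : ℕ) (ω : Ω) : ℝ :=
  if ∑ j ∈ range (k + 1), y j ω ^ 2 ≤ C * b n then u * (y k ω * e k ω) / √(b n) else 0

lemma auxTr_sum_sq (y e : ℕ → Ω → ℝ) (b : ℕ → ℝ) (u C : ℝ) (hC : 0 ≤ C)
    (he : ∀ k ω, |e k ω| ≤ 2) (n : ℕ) (s : Finset ℕ) (hs : s ⊆ range n) (ω : Ω) :
    ∑ k ∈ s, auxTr y e b u C n k ω ^ 2 ≤ 4 * u ^ 2 * C := by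
  rcases le_or_gt (b n) 0 with hb | hb
  · have : ∀ k, auxTr y e b u C n k ω = 0 := by
      intro k; simp [auxTr, Real.sqrt_eq_zero_of_nonpos hb]
    simp [this]; positivity
  · have h1 : ∀ k, auxTr y e b u C n k ω ^ 2 ≤ (4 * u ^ 2 / b n) *
        (if ∑ j ∈ range (k + 1), y j ω ^ 2 ≤ C * b n then y k ω ^ 2 else 0) := by
      intro k
      unfold auxTr
      split_ifs with h
      · rw [div_pow, Real.sq_sqrt hb.le, div_mul_eq_mul_div]
        gcongr
        have h2 : e k ω ^ 2 ≤ 4 := by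
          have := he k ω
          rw [abs_le] at this
          nlinarith
        have h3 : 0 ≤ u ^ 2 * y k ω ^ 2 := by positivity
        nlinarith
      · simp
    calc ∑ k ∈ s, auxTr y e b u C n k ω ^ 2 ≤ ∑ k ∈ range n, auxTr y e b u C n k ω ^ 2 :=
          sum_le_sum_of_subset_of_nonneg hs fun _ _ _ => sq_nonneg _
      _ ≤ ∑ k ∈ range n, (4 * u ^ 2 / b n) *
        (if ∑ j ∈ range (k + 1), y j ω ^ 2 ≤ C * b n then y k ω ^ 2 else 0) :=
          sum_le_sum fun k _ => h1 k
      _ ≤ (4 * u ^ 2 / b n) * (C * b n) := by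
          rw [← mul_sum]
          gcongr
          exact aux_trunc_sum (fun k => y k ω ^ 2) (fun _ => sq_nonneg _) _ (by positivity) n
      _ = _ := by field_simp

lemma auxTr_measurable {m0 : MeasurableSpace Ω} (ℱ : Filtration ℕ m0) (y e : ℕ → Ω → ℝ)
    (b : ℕ → ℝ) (u C : ℝ) (hy : ∀ k, Measurable[ℱ k] (y k)) (he : ∀ k, Measurable[ℱ (k + 1)] (e k))
    (n k : ℕ) : Measurable[ℱ (k + 1)] (auxTr y e b u C n k) := by
  have hy' : ∀ j ≤ k + 1, Measurable[ℱ (k + 1)] (y j) := fun j hj => (hy j).mono (ℱ.mono hj) le_rfl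
  unfold auxTr
  refine Measurable.ite ?_ ?_ measurable_const
  · refine measurableSet_le ?_ measurable_const
    exact Finset.measurable_fun_sum _ fun j hj =>
      (hy' j (by rw [Finset.mem_range] at hj; omega)).pow_const 2
  · exact (((hy' k (by omega)).mul (he k)).const_mul u).div_const _

lemma auxProd_measurable {m0 : MeasurableSpace Ω} (ℱ : Filtration ℕ m0) (y e : ℕ → Ω → ℝ)
    (b : ℕ → ℝ) (u C : ℝ) (hy : ∀ k, Measurable[ℱ k] (y k)) (he : ∀ k, Measurable[ℱ (k + 1)] (e k))
    (n r : ℕ) (s : Finset ℕ) (hs : s ⊆ range r) :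
    Measurable[ℱ r] (fun ω => ∏ k ∈ s, (1 + Complex.I * (auxTr y e b u C n k ω : ℂ))) := by
  refine Finset.measurable_fun_prod _ fun k hk => ?_
  have hk' : k + 1 ≤ r := by
    have := hs hk
    rw [Finset.mem_range] at this; omega
  have h := (auxTr_measurable ℱ y e b u C hy he n k).mono (ℱ.mono hk') le_rfl
  exact ((Complex.measurable_ofReal.comp h).const_mul _).const_add _

lemma aux_orth {m m0 : MeasurableSpace Ω} (hm : m ≤ m0) (μ : Measure Ω) [IsProbabilityMeasure μ]
    (H : Ω → ℂ) (hH : Measurable[m] H) (c : ℝ) (hHc : ∀ ω, ‖H ω‖ ≤ c) (g : Ω → ℝ)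
    (hg : Integrable g μ) (hg0 : μ[g | m] =ᵐ[μ] 0) : ∫ ω, H ω * (g ω : ℂ) ∂μ = 0 := by
  have h := condExp_stronglyMeasurable_bilin_of_bound
    (ContinuousLinearMap.lsmul ℝ ℝ : ℝ →L[ℝ] ℂ →L[ℝ] ℂ).flip hm
    (hH.stronglyMeasurable) hg c (ae_of_all _ hHc)
  rw [← integral_condExp hm, integral_congr_ae (g := fun _ => (0 : ℂ)), integral_zero]
  have e : (fun ω => H ω * (g ω : ℂ)) = fun ω =>
      (ContinuousLinearMap.lsmul ℝ ℝ : ℝ →L[ℝ] ℂ →L[ℝ] ℂ).flip (H ω) (g ω) := by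
    funext ω
    simp [mul_comm]
  rw [e]
  filter_upwards [h, hg0] with ω h1 h2
  rw [h1, h2]; simp

lemma aux_mart {m0 : MeasurableSpace Ω} (μ : Measure Ω) [IsProbabilityMeasure μ]
    (ℱ : Filtration ℕ m0) (y e : ℕ → Ω → ℝ)
    (b : ℕ → ℝ) (u C : ℝ) (hC : 0 ≤ C)
    (hy : ∀ k, Measurable[ℱ k] (y k)) (he : ∀ k, Measurable[ℱ (k + 1)] (e k))
    (hy1 : ∀ k ω, |y k ω| ≤ 1)
    (he2 : ∀ k ω, |e k ω| ≤ 2) (hmart : ∀ k, μ[e k | ℱ k] =ᵐ[μ] 0)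
    (m n : ℕ) (Z : Ω → ℂ) (hZ : Measurable[ℱ m] Z) (K : ℝ) (hZK : ∀ ω, ‖Z ω‖ ≤ K)
    (r : ℕ) (hmr : m ≤ r) (hrn : r ≤ n) :
    ∫ ω, Z ω * ∏ k ∈ Ico m r, (1 + Complex.I * (auxTr y e b u C n k ω : ℂ)) ∂μ =
      ∫ ω, Z ω ∂μ := by
  induction r, hmr using Nat.le_induction with
  | base => simp
  | succ r hmr ih =>
    rw [← ih (by omega)]
    have hsub : Ico m r ⊆ range r := by
      intro k hk; rw [Finset.mem_Ico] at hk; rw [Finset.mem_range]; omega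
    have hsubn : Ico m r ⊆ range n := hsub.trans (range_subset_range.2 (by omega))
    set P : Ω → ℂ := fun ω => ∏ k ∈ Ico m r, (1 + Complex.I * (auxTr y e b u C n k ω : ℂ)) with hP
    have hPm : Measurable[ℱ r] P := auxProd_measurable ℱ y e b u C hy he n r _ hsub
    have hPb : ∀ ω, ‖P ω‖ ≤ Real.exp (4 * u ^ 2 * C / 2) := fun ω =>
      aux_norm_prod _ _ _ (auxTr_sum_sq y e b u C hC he2 n _ hsubn ω)
    have hZr : Measurable[ℱ r] Z := hZ.mono (ℱ.mono hmr) le_rfl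
    have hK0 : 0 ≤ K := by
      obtain ⟨ω⟩ : Nonempty Ω := nonempty_of_isProbabilityMeasure μ
      exact (norm_nonneg _).trans (hZK ω)
    set c : Ω → ℂ := fun ω => Complex.I *
      ((if ∑ j ∈ range (r + 1), y j ω ^ 2 ≤ C * b n then u * y r ω / √(b n) else 0 : ℝ) : ℂ) with hc
    have hcm : Measurable[ℱ r] c := by
      refine Measurable.const_mul (Complex.measurable_ofReal.comp ?_) _
      have hy' : ∀ j ≤ r, Measurable[ℱ r] (y j) := fun j hj => (hy j).mono (ℱ.mono hj) le_rfl
      refine Measurable.ite ?_ ?_ measurable_const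
      · refine measurableSet_le ?_ measurable_const
        exact Finset.measurable_fun_sum _ fun j hj =>
          (hy' j (by rw [Finset.mem_range] at hj; omega)).pow_const 2
      · exact ((hy' r le_rfl).const_mul u).div_const _
    have hcb : ∀ ω, ‖c ω‖ ≤ |u| / √(b n) := by
      intro ω
      rw [hc]
      simp only [norm_mul, Complex.norm_I, one_mul, Complex.norm_real, Real.norm_eq_abs]
      split_ifs
      · rw [abs_div, abs_mul, abs_of_nonneg (Real.sqrt_nonneg _)]
        gcongr
        exact mul_le_of_le_one_right (abs_nonneg _) (hy1 r ω)
      · simp; positivity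
    have hcTr : ∀ ω, Complex.I * (auxTr y e b u C n r ω : ℂ) = c ω * (e r ω : ℂ) := by
      intro ω
      simp only [hc, auxTr]
      split_ifs
      · push_cast; ring
      · simp
    have hem : Measurable (e r) := (he r).mono (ℱ.le _) le_rfl
    have heint : Integrable (e r) μ :=
      Integrable.of_bound hem.aestronglyMeasurable 2 (ae_of_all _ fun ω => he2 r ω)
    have hint1 : Integrable (fun ω => Z ω * P ω) μ := by
      refine Integrable.of_bound ((hZr.mul hPm).mono (ℱ.le _) le_rfl).aestronglyMeasurable
        (K * Real.exp (4 * u ^ 2 * C / 2)) (ae_of_all _ fun ω => ?_)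
      rw [norm_mul]
      exact mul_le_mul (hZK ω) (hPb ω) (norm_nonneg _) hK0
    have hHb : ∀ ω, ‖Z ω * P ω * c ω‖ ≤ K * Real.exp (4 * u ^ 2 * C / 2) * (|u| / √(b n)) := by
      intro ω
      rw [norm_mul, norm_mul]
      exact mul_le_mul (mul_le_mul (hZK ω) (hPb ω) (norm_nonneg _) hK0) (hcb ω) (norm_nonneg _)
        (by positivity)
    have hHm : Measurable[ℱ r] (fun ω => Z ω * P ω * c ω) := (hZr.mul hPm).mul hcm
    have horth := aux_orth (ℱ.le r) μ (fun ω => Z ω * P ω * c ω) hHm _ hHb (e r) heint (hmart r)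
    have hint2 : Integrable (fun ω => Z ω * P ω * c ω * (e r ω : ℂ)) μ := by
      refine Integrable.of_bound ((hHm.mono (ℱ.le _) le_rfl).mul
        (Complex.measurable_ofReal.comp hem)).aestronglyMeasurable
        (K * Real.exp (4 * u ^ 2 * C / 2) * (|u| / √(b n)) * 2) (ae_of_all _ fun ω => ?_)
      rw [norm_mul, Complex.norm_real]
      exact mul_le_mul (hHb ω) (he2 r ω) (norm_nonneg _) (by positivity)
    have e1 : (fun ω => Z ω * ∏ k ∈ Ico m (r + 1), (1 + Complex.I * (auxTr y e b u C n k ω : ℂ)))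
        = fun ω => Z ω * P ω + Z ω * P ω * c ω * (e r ω : ℂ) := by
      funext ω
      rw [prod_Ico_succ_top hmr, hcTr]
      simp only [hP]
      ring
    rw [e1, integral_add hint1 hint2, horth, add_zero]

lemma aux_mart_lim {m0 : MeasurableSpace Ω} (μ : Measure Ω) [IsProbabilityMeasure μ]
    (ℱ : Filtration ℕ m0) (y e : ℕ → Ω → ℝ)
    (b : ℕ → ℝ) (hb : Tendsto b atTop atTop) (u C : ℝ) (hC : 0 ≤ C)
    (hy : ∀ k, Measurable[ℱ k] (y k)) (he : ∀ k, Measurable[ℱ (k + 1)] (e k))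
    (hy1 : ∀ k ω, |y k ω| ≤ 1)
    (he2 : ∀ k ω, |e k ω| ≤ 2) (hmart : ∀ k, μ[e k | ℱ k] =ᵐ[μ] 0)
    (m : ℕ) (Z : Ω → ℂ) (hZ : Measurable[ℱ m] Z) (K : ℝ) (hZK : ∀ ω, ‖Z ω‖ ≤ K) :
    Tendsto (fun n => ∫ ω, Z ω * ∏ k ∈ range n, (1 + Complex.I * (auxTr y e b u C n k ω : ℂ)) ∂μ)
      atTop (𝓝 (∫ ω, Z ω ∂μ)) := by
  have hK0 : 0 ≤ K := by
    obtain ⟨ω⟩ : Nonempty Ω := nonempty_of_isProbabilityMeasure μ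
    exact (norm_nonneg _).trans (hZK ω)
  have hZm : Measurable Z := hZ.mono (ℱ.le _) le_rfl
  have hsub : ∀ n, Ico m n ⊆ range n := by
    intro n k hk; rw [Finset.mem_Ico] at hk; rw [Finset.mem_range]; omega
  have hPm : ∀ (n : ℕ) (s : Finset ℕ), s ⊆ range n → Measurable (fun ω => ∏ k ∈ s, (1 + Complex.I * (auxTr y e b u C n k ω : ℂ))) :=
    fun n s hs => (auxProd_measurable ℱ y e b u C hy he n n s hs).mono (ℱ.le _) le_rfl
  have hPb : ∀ (n : ℕ) (s : Finset ℕ), s ⊆ range n → ∀ ω, ‖∏ k ∈ s, (1 + Complex.I * (auxTr y e b u C n k ω : ℂ))‖ ≤ Real.exp (4 * u ^ 2 * C / 2) :=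
    fun n s hs ω => aux_norm_prod _ _ _ (auxTr_sum_sq y e b u C hC he2 n _ hs ω)
  have hint : ∀ (n : ℕ) (s : Finset ℕ), s ⊆ range n → Integrable (fun ω => Z ω * ∏ k ∈ s, (1 + Complex.I * (auxTr y e b u C n k ω : ℂ))) μ := by
    intro n s hs
    refine Integrable.of_bound (hZm.mul (hPm n s hs)).aestronglyMeasurable
        (K * Real.exp (4 * u ^ 2 * C / 2)) (ae_of_all _ fun ω => ?_)
    rw [norm_mul]
    exact mul_le_mul (hZK ω) (hPb n s hs ω) (norm_nonneg _) hK0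
  have hs : Tendsto (fun n => √(b n)) atTop atTop := Real.tendsto_sqrt_atTop.comp hb
  have hTr0 : ∀ k ω, Tendsto (fun n => auxTr y e b u C n k ω) atTop (𝓝 0) := by
    intro k ω
    refine squeeze_zero_norm (a := fun n => |u| * (1 * 2) / √(b n)) ?_ (hs.const_div_atTop _)
    intro n
    unfold auxTr
    split_ifs
    · rw [Real.norm_eq_abs, abs_div, abs_mul, abs_mul, abs_of_nonneg (Real.sqrt_nonneg _)]
      gcongr
      · exact hy1 k ω
      · exact he2 k ω
    · simp; positivity
  have hfirst : ∀ ω, Tendsto (fun n => ∏ k ∈ range m, (1 + Complex.I * (auxTr y e b u C n k ω : ℂ)))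
      atTop (𝓝 1) := by
    intro ω
    have : Tendsto (fun n => ∏ k ∈ range m, (1 + Complex.I * (auxTr y e b u C n k ω : ℂ)))
      atTop (𝓝 (∏ k ∈ range m, (1 + Complex.I * ((0 : ℝ) : ℂ)))) :=
      tendsto_finsetProd _ fun k _ =>
        (((Complex.continuous_ofReal.tendsto _).comp (hTr0 k ω)).const_mul _).const_add _
    simpa using this
  have hdiff : Tendsto (fun n => ∫ ω, (Z ω * ∏ k ∈ range n, (1 + Complex.I * (auxTr y e b u C n k ω : ℂ))
      - Z ω * ∏ k ∈ Ico m n, (1 + Complex.I * (auxTr y e b u C n k ω : ℂ))) ∂μ) atTop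
      (𝓝 (∫ ω, (0 : ℂ) ∂μ)) := by
    refine tendsto_integral_of_dominated_convergence
      (fun _ => K * Real.exp (4 * u ^ 2 * C / 2) + K * Real.exp (4 * u ^ 2 * C / 2)) ?_
      (integrable_const _) ?_ ?_
    · intro n
      exact ((hint n _ subset_rfl).sub (hint n _ (hsub n))).aestronglyMeasurable
    · intro n
      refine ae_of_all _ fun ω => (norm_sub_le _ _).trans ?_
      rw [norm_mul, norm_mul]
      exact add_le_add (mul_le_mul (hZK ω) (hPb n _ subset_rfl ω) (norm_nonneg _) hK0)
        (mul_le_mul (hZK ω) (hPb n _ (hsub n) ω) (norm_nonneg _) hK0)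
    · refine ae_of_all _ fun ω => ?_
      refine squeeze_zero_norm' (a := fun n => K * Real.exp (4 * u ^ 2 * C / 2) *
        ‖∏ k ∈ range m, (1 + Complex.I * (auxTr y e b u C n k ω : ℂ)) - 1‖) ?_ ?_
      · filter_upwards [eventually_ge_atTop m] with n hn
        rw [← prod_range_mul_prod_Ico _ hn]
        have e2 : ∀ A B C : ℂ, A * (B * C) - A * C = A * C * (B - 1) := by intros; ring
        rw [e2, norm_mul, norm_mul]
        gcongr
        · exact hZK ω
        · exact hPb n _ (hsub n) ω
      · have := ((hfirst ω).sub_const 1).norm.const_mul (K * Real.exp (4 * u ^ 2 * C / 2))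
        simpa using this
  rw [integral_zero] at hdiff
  have h2 := hdiff.add_const (∫ ω, Z ω ∂μ)
  rw [zero_add] at h2
  refine (tendsto_congr' ?_).1 h2
  filter_upwards [eventually_ge_atTop m] with n hn
  rw [integral_sub (hint n _ subset_rfl) (hint n _ (hsub n)),
    aux_mart μ ℱ y e b u C hC hy he hy1 he2 hmart m n Z hZ K hZK n hn le_rfl]
  ring

/-- Closure under bounded almost everywhere limits. -/
lemma aux_closure {m0 : MeasurableSpace Ω} (μ : Measure Ω) [IsProbabilityMeasure μ]
    (P : ℕ → Ω → ℂ) (Q : Ω → ℂ) (hP : ∀ n, AEStronglyMeasurable (P n) μ)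
    (hQ : AEStronglyMeasurable Q μ) (B : ℝ) (hPB : ∀ n ω, ‖P n ω‖ ≤ B) (hQB : ∀ ω, ‖Q ω‖ ≤ B)
    (Zs : ℕ → Ω → ℂ) (Z : Ω → ℂ) (hZs : ∀ m, AEStronglyMeasurable (Zs m) μ) (K : ℝ)
    (hZsK : ∀ m ω, ‖Zs m ω‖ ≤ K) (hZK : ∀ ω, ‖Z ω‖ ≤ K)
    (hlim : ∀ᵐ ω ∂μ, Tendsto (fun m => Zs m ω) atTop (𝓝 (Z ω)))
    (h : ∀ m, Tendsto (fun n => ∫ ω, Zs m ω * P n ω ∂μ) atTop (𝓝 (∫ ω, Zs m ω * Q ω ∂μ))) :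
    Tendsto (fun n => ∫ ω, Z ω * P n ω ∂μ) atTop (𝓝 (∫ ω, Z ω * Q ω ∂μ)) := by
  obtain ⟨ω₀⟩ : Nonempty Ω := nonempty_of_isProbabilityMeasure μ
  have hB0 : 0 ≤ B := (norm_nonneg _).trans (hQB ω₀)
  have hK0 : 0 ≤ K := (norm_nonneg _).trans (hZK ω₀)
  have hZ : AEStronglyMeasurable Z μ := aestronglyMeasurable_of_tendsto_ae atTop hZs hlim
  have hint : ∀ (F G : Ω → ℂ), AEStronglyMeasurable F μ → AEStronglyMeasurable G μ →
      (∀ ω, ‖F ω‖ ≤ K) → (∀ ω, ‖G ω‖ ≤ B) → Integrable (fun ω => F ω * G ω) μ := by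
    intro F G hF hG hFK hGB
    refine Integrable.of_bound (hF.mul hG) (K * B) (ae_of_all _ fun ω => ?_)
    rw [norm_mul]
    exact mul_le_mul (hFK ω) (hGB ω) (norm_nonneg _) hK0
  have hD : Tendsto (fun m => ∫ ω, ‖Zs m ω - Z ω‖ * B ∂μ) atTop (𝓝 (∫ ω, (0 : ℝ) ∂μ)) := by
    refine tendsto_integral_of_dominated_convergence (fun _ => (K + K) * B) ?_
      (integrable_const _) ?_ ?_
    · exact fun m => ((hZs m).sub hZ).norm.mul_const B
    · intro m
      refine ae_of_all _ fun ω => ?_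
      rw [Real.norm_eq_abs, abs_of_nonneg (by positivity)]
      gcongr
      exact (norm_sub_le _ _).trans (add_le_add (hZsK m ω) (hZK ω))
    · filter_upwards [hlim] with ω hω
      have := ((hω.sub_const (Z ω)).norm.mul_const B)
      simpa using this
  rw [integral_zero] at hD
  have hbd : ∀ (m : ℕ) (G : Ω → ℂ), AEStronglyMeasurable G μ → (∀ ω, ‖G ω‖ ≤ B) →
      ‖∫ ω, Z ω * G ω ∂μ - ∫ ω, Zs m ω * G ω ∂μ‖ ≤ ∫ ω, ‖Zs m ω - Z ω‖ * B ∂μ := by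
    intro m G hG hGB
    rw [← integral_sub (hint Z G hZ hG hZK hGB) (hint _ G (hZs m) hG (hZsK m) hGB)]
    refine norm_integral_le_of_norm_le ?_ (ae_of_all _ fun ω => ?_)
    · refine Integrable.of_bound (((hZs m).sub hZ).norm.mul_const B) ((K + K) * B)
        (ae_of_all _ fun ω => ?_)
      rw [Real.norm_eq_abs, abs_of_nonneg (by positivity)]
      gcongr
      exact (norm_sub_le _ _).trans (add_le_add (hZsK m ω) (hZK ω))
    · rw [← sub_mul, norm_mul, norm_sub_rev]
      gcongr
      exact hGB ω
  rw [Metric.tendsto_atTop]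
  intro ε hε
  obtain ⟨m, hm⟩ := (hD.eventually (gt_mem_nhds (show (0 : ℝ) < ε / 3 by positivity))).exists
  obtain ⟨N, hN⟩ := Metric.tendsto_atTop.1 (h m) (ε / 3) (by positivity)
  refine ⟨N, fun n hn => ?_⟩
  have h1 := hbd m (P n) (hP n) (hPB n)
  have h2 := hbd m Q hQ hQB
  have h3 := hN n hn
  rw [dist_eq_norm] at h3 ⊢
  have e1 : ∫ ω, Z ω * P n ω ∂μ - ∫ ω, Z ω * Q ω ∂μ =
      (∫ ω, Z ω * P n ω ∂μ - ∫ ω, Zs m ω * P n ω ∂μ) +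
      (∫ ω, Zs m ω * P n ω ∂μ - ∫ ω, Zs m ω * Q ω ∂μ) -
      (∫ ω, Z ω * Q ω ∂μ - ∫ ω, Zs m ω * Q ω ∂μ) := by ring
  rw [e1]
  refine (norm_sub_le _ _).trans_lt ?_
  have h4 := norm_add_le (∫ ω, Z ω * P n ω ∂μ - ∫ ω, Zs m ω * P n ω ∂μ)
    (∫ ω, Zs m ω * P n ω ∂μ - ∫ ω, Zs m ω * Q ω ∂μ)
  linarith

lemma aux_stable {m0 : MeasurableSpace Ω} (μ : Measure Ω) [IsProbabilityMeasure μ]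
    (ℱ : Filtration ℕ m0) (y e l : ℕ → Ω → ℝ) (L : Ω → ℝ) (hLm : Measurable L)
    (b : ℕ → ℝ) (hb : Tendsto b atTop atTop) (u C : ℝ) (hC : 0 ≤ C)
    (hy : ∀ k, Measurable[ℱ k] (y k)) (he : ∀ k, Measurable[ℱ (k + 1)] (e k))
    (hl : ∀ k, Measurable[ℱ k] (l k))
    (hy1 : ∀ k ω, |y k ω| ≤ 1)
    (he2 : ∀ k ω, |e k ω| ≤ 2) (hmart : ∀ k, μ[e k | ℱ k] =ᵐ[μ] 0)
    (hlL : ∀ᵐ ω ∂μ, Tendsto (fun k => l k ω) atTop (𝓝 (L ω)))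
    (hq : ∀ᵐ ω ∂μ, Tendsto (fun n => (∑ k ∈ range n, y k ω ^ 2) / b n) atTop (𝓝 (L ω ^ 2)))
    (hq' : ∀ᵐ ω ∂μ, Tendsto (fun n => (∑ k ∈ range n, (y k ω * e k ω) ^ 2) / b n) atTop
      (𝓝 (L ω ^ 2)))
    (h : ℝ → ℂ) (hc : Continuous h) (h1 : ∀ x, ‖h x‖ ≤ 1) (h0 : ∀ x, C ≤ x ^ 2 → h x = 0) :
    Tendsto (fun n => ∫ ω, h (L ω) * Complex.exp (Complex.I *
        ((u * ((∑ k ∈ range n, y k ω * e k ω) / √(b n)) : ℝ) : ℂ)) ∂μ) atTop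
      (𝓝 (∫ ω, h (L ω) * Complex.exp (-(u ^ 2 * L ω ^ 2 / 2 : ℝ)) ∂μ)) := by
  set G : ℝ → ℂ := fun x => h x * Complex.exp (-(u ^ 2 * x ^ 2 / 2 : ℝ)) with hG
  have hGc : Continuous G := by
    refine hc.mul (Complex.continuous_exp.comp ?_)
    exact (Complex.continuous_ofReal.comp (by fun_prop)).neg
  have hGb : ∀ x, ‖G x‖ ≤ 1 := by
    intro x
    rw [hG]
    simp only [norm_mul]
    have : ‖Complex.exp (-((u ^ 2 * x ^ 2 / 2 : ℝ) : ℂ))‖ ≤ 1 := by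
      rw [← Complex.ofReal_neg, Complex.norm_exp_ofReal, Real.exp_le_one_iff]
      have : 0 ≤ u ^ 2 * x ^ 2 / 2 := by positivity
      linarith
    exact mul_le_one₀ (h1 x) (norm_nonneg _) this
  set P : ℕ → Ω → ℂ := fun n ω =>
    ∏ k ∈ range n, (1 + Complex.I * (auxTr y e b u C n k ω : ℂ)) with hP
  have hPm : ∀ n, Measurable (P n) := fun n =>
    (auxProd_measurable ℱ y e b u C hy he n n _ subset_rfl).mono (ℱ.le _) le_rfl
  have hPb : ∀ n ω, ‖P n ω‖ ≤ Real.exp (4 * u ^ 2 * C / 2) := fun n ω =>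
    aux_norm_prod _ _ _ (auxTr_sum_sq y e b u C hC he2 n _ subset_rfl ω)
  have hlm : ∀ k, Measurable (l k) := fun k => (hl k).mono (ℱ.le _) le_rfl
  have hmain : Tendsto (fun n => ∫ ω, G (L ω) * P n ω ∂μ) atTop
      (𝓝 (∫ ω, G (L ω) * (fun _ => (1 : ℂ)) ω ∂μ)) := by
    refine aux_closure μ P (fun _ => 1) (fun n => (hPm n).aestronglyMeasurable)
      aestronglyMeasurable_const (Real.exp (4 * u ^ 2 * C / 2)) hPb ?_ (fun m ω => G (l m ω))
      (fun ω => G (L ω)) (fun m => (hGc.measurable.comp (hlm m)).aestronglyMeasurable) 1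
      (fun m ω => hGb _) (fun ω => hGb _) ?_ ?_
    · intro ω
      rw [norm_one]
      exact Real.one_le_exp (by positivity)
    · filter_upwards [hlL] with ω hω using (hGc.tendsto _).comp hω
    · intro m
      simp only [mul_one]
      exact aux_mart_lim μ ℱ y e b hb u C hC hy he hy1 he2 hmart m (fun ω => G (l m ω))
        (hGc.measurable.comp (hl m)) 1 (fun ω => hGb _)
  simp only [mul_one] at hmain
  set E : ℕ → Ω → ℂ := fun n ω => Complex.exp (Complex.I *
        ((u * ((∑ k ∈ range n, y k ω * e k ω) / √(b n)) : ℝ) : ℂ)) with hE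
  have hym : ∀ k, Measurable (y k) := fun k => (hy k).mono (ℱ.le _) le_rfl
  have hem : ∀ k, Measurable (e k) := fun k => (he k).mono (ℱ.le _) le_rfl
  have hEm : ∀ n, Measurable (E n) := by
    intro n
    refine Complex.measurable_exp.comp (Measurable.const_mul (Complex.measurable_ofReal.comp ?_) _)
    exact ((Finset.measurable_fun_sum _ fun k _ => (hym k).mul (hem k)).div_const _).const_mul _
  have hEb : ∀ n ω, ‖E n ω‖ = 1 := by
    intro n ω
    rw [hE]
    simp only
    rw [mul_comm Complex.I, Complex.norm_exp_ofReal_mul_I]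
  have hint1 : ∀ n, Integrable (fun ω => G (L ω) * P n ω) μ := by
    intro n
    refine Integrable.of_bound ((hGc.measurable.comp hLm).mul (hPm n)).aestronglyMeasurable
      (1 * Real.exp (4 * u ^ 2 * C / 2)) (ae_of_all _ fun ω => ?_)
    rw [norm_mul]
    exact mul_le_mul (hGb _) (hPb n ω) (norm_nonneg _) zero_le_one
  have hint2 : ∀ n, Integrable (fun ω => h (L ω) * E n ω) μ := by
    intro n
    refine Integrable.of_bound ((hc.measurable.comp hLm).mul (hEm n)).aestronglyMeasurable
      1 (ae_of_all _ fun ω => ?_)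
    rw [norm_mul, hEb, mul_one]
    exact h1 _
  have hdiff : Tendsto (fun n => ∫ ω, (G (L ω) * P n ω - h (L ω) * E n ω) ∂μ) atTop
      (𝓝 (∫ ω, (0 : ℂ) ∂μ)) := by
    refine tendsto_integral_of_dominated_convergence
      (fun _ => 1 * Real.exp (4 * u ^ 2 * C / 2) + 1) ?_ (integrable_const _) ?_ ?_
    · exact fun n => ((hint1 n).sub (hint2 n)).aestronglyMeasurable
    · intro n
      refine ae_of_all _ fun ω => (norm_sub_le _ _).trans ?_
      rw [norm_mul (G (L ω)) (P n ω), norm_mul (h (L ω)) (E n ω), hEb, mul_one]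
      exact add_le_add (mul_le_mul (hGb _) (hPb n ω) (norm_nonneg _) zero_le_one) (h1 _)
    · filter_upwards [hq, hq'] with ω hω hω'
      by_cases hCL : C ≤ L ω ^ 2
      · simp [hG, h0 _ hCL]
      · push Not at hCL
        have hpath := aux_pathwise (fun k => y k ω * e k ω) b u (L ω ^ 2) (fun k => by
          rw [abs_mul]
          calc |y k ω| * |e k ω| ≤ 1 * 2 :=
                mul_le_mul (hy1 k ω) (he2 k ω) (abs_nonneg _) zero_le_one
            _ = 2 := by norm_num) hb hω'
        have h3 := hpath.const_mul (h (L ω))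
        rw [mul_zero] at h3
        refine (tendsto_congr' ?_).1 h3
        filter_upwards [hω.eventually (gt_mem_nhds hCL), hb.eventually_gt_atTop 0] with n hn hbn
        rw [div_lt_iff₀ hbn] at hn
        have e1 : P n ω = ∏ k ∈ range n,
            (1 + Complex.I * ((u * (y k ω * e k ω) / √(b n) : ℝ) : ℂ)) := by
          rw [hP]
          refine prod_congr rfl fun k hk => ?_
          have : ∑ j ∈ range (k + 1), y j ω ^ 2 ≤ C * b n := by
            refine le_trans ?_ hn.le
            refine sum_le_sum_of_subset_of_nonneg ?_ fun _ _ _ => sq_nonneg _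
            rw [Finset.mem_range] at hk
            exact range_subset_range.2 hk
          rw [auxTr, if_pos this]
        rw [e1, hG, hE]
        ring
  rw [integral_zero] at hdiff
  have h4 := hmain.sub hdiff
  rw [sub_zero] at h4
  refine (tendsto_congr fun n => ?_).1 h4
  rw [integral_sub (hint1 n) (hint2 n)]
  ring

lemma aux_stable_ind {m0 : MeasurableSpace Ω} (μ : Measure Ω) [IsProbabilityMeasure μ]
    (ℱ : Filtration ℕ m0) (y e l : ℕ → Ω → ℝ) (L : Ω → ℝ) (hLm : Measurable L)
    (b : ℕ → ℝ) (hb : Tendsto b atTop atTop) (u s : ℝ)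
    (hy : ∀ k, Measurable[ℱ k] (y k)) (he : ∀ k, Measurable[ℱ (k + 1)] (e k))
    (hl : ∀ k, Measurable[ℱ k] (l k))
    (hy1 : ∀ k ω, |y k ω| ≤ 1)
    (he2 : ∀ k ω, |e k ω| ≤ 2) (hmart : ∀ k, μ[e k | ℱ k] =ᵐ[μ] 0)
    (hlL : ∀ᵐ ω ∂μ, Tendsto (fun k => l k ω) atTop (𝓝 (L ω)))
    (hq : ∀ᵐ ω ∂μ, Tendsto (fun n => (∑ k ∈ range n, y k ω ^ 2) / b n) atTop (𝓝 (L ω ^ 2)))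
    (hq' : ∀ᵐ ω ∂μ, Tendsto (fun n => (∑ k ∈ range n, (y k ω * e k ω) ^ 2) / b n) atTop
      (𝓝 (L ω ^ 2))) :
    Tendsto (fun n => ∫ ω in {ω | L ω ≠ 0}, Complex.exp (Complex.I *
        ((u * ((∑ k ∈ range n, y k ω * e k ω) / √(b n) -
          s * √((∑ k ∈ range n, y k ω ^ 2) / b n)) : ℝ) : ℂ)) ∂μ) atTop
      (𝓝 (∫ ω in {ω | L ω ≠ 0}, Complex.exp (Complex.I * ((-(u * s * |L ω|) : ℝ) : ℂ)) *
        Complex.exp (-(u ^ 2 * L ω ^ 2 / 2 : ℝ)) ∂μ)) := by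
  have hA : MeasurableSet {ω | L ω ≠ 0} := hLm (measurableSet_singleton (0 : ℝ)).compl
  have hym : ∀ k, Measurable (y k) := fun k => (hy k).mono (ℱ.le _) le_rfl
  have hem : ∀ k, Measurable (e k) := fun k => (he k).mono (ℱ.le _) le_rfl
  set φ : ℝ → ℂ := fun x => Complex.exp (Complex.I * ((-(u * s * |x|) : ℝ) : ℂ)) with hφ
  have hφc : Continuous φ := by
    refine Complex.continuous_exp.comp (continuous_const.mul (Complex.continuous_ofReal.comp ?_))
    fun_prop
  have hexp1 : ∀ x : ℝ, ‖Complex.exp (Complex.I * (x : ℂ))‖ = 1 := by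
    intro x; rw [mul_comm Complex.I, Complex.norm_exp_ofReal_mul_I]
  have hφ1 : ∀ x, ‖φ x‖ = 1 := fun x => hexp1 _
  set E : ℕ → Ω → ℂ := fun n ω => Complex.exp (Complex.I *
        ((u * ((∑ k ∈ range n, y k ω * e k ω) / √(b n)) : ℝ) : ℂ)) with hE
  have hEm : ∀ n, Measurable (E n) := by
    intro n
    refine Complex.measurable_exp.comp (Measurable.const_mul (Complex.measurable_ofReal.comp ?_) _)
    exact ((Finset.measurable_fun_sum _ fun k _ => (hym k).mul (hem k)).div_const _).const_mul _
  have hEb : ∀ n ω, ‖E n ω‖ = 1 := fun n ω => hexp1 _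
  set Q : Ω → ℂ := fun ω => Complex.exp (-(u ^ 2 * L ω ^ 2 / 2 : ℝ)) with hQ
  have hQm : Measurable Q :=
    Complex.measurable_exp.comp (Complex.measurable_ofReal.comp
      (((hLm.pow_const 2).const_mul _).div_const _)).neg
  have hQb : ∀ ω, ‖Q ω‖ ≤ 1 := by
    intro ω
    rw [hQ]
    simp only
    rw [← Complex.ofReal_neg, Complex.norm_exp_ofReal, Real.exp_le_one_iff]
    have : 0 ≤ u ^ 2 * L ω ^ 2 / 2 := by positivity
    linarith
  -- cutoffs
  set r : ℕ → ℝ → ℝ := fun K x => min 1 (K * |x|) * max 0 (min 1 (K - |x|)) with hr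
  have hrc : ∀ K, Continuous (r K) := by
    intro K; rw [hr]; fun_prop
  have hr01 : ∀ K x, |r K x| ≤ 1 := by
    intro K x
    rw [hr]
    simp only [abs_mul]
    have h1 : |min 1 ((K : ℝ) * |x|)| ≤ 1 := by
      rw [abs_of_nonneg (le_min zero_le_one (by positivity))]; exact min_le_left _ _
    have h2 : |max 0 (min 1 ((K : ℝ) - |x|))| ≤ 1 := by
      rw [abs_of_nonneg (le_max_left _ _)]; exact max_le zero_le_one (min_le_left _ _)
    exact mul_le_one₀ h1 (abs_nonneg _) h2
  have hr0 : ∀ (K : ℕ) x, (K : ℝ) ^ 2 ≤ x ^ 2 → r K x = 0 := by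
    intro K x hx
    have : (K : ℝ) ≤ |x| := by
      have := sq_le_sq.1 hx
      rwa [abs_of_nonneg (Nat.cast_nonneg K)] at this
    have h2 : max 0 (min 1 ((K : ℝ) - |x|)) = 0 :=
      max_eq_left ((min_le_right _ _).trans (by linarith))
    simp only [hr, h2, mul_zero]
  set Z : Ω → ℂ := fun ω => ({ω | L ω ≠ 0} : Set Ω).indicator (fun ω => φ (L ω)) ω with hZ
  have hZ1 : ∀ ω, ‖Z ω‖ ≤ 1 := by
    intro ω
    rw [hZ]
    simp only
    refine (norm_indicator_le_norm_self _ _).trans (hφ1 _).le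
  have hmain : Tendsto (fun n => ∫ ω, Z ω * E n ω ∂μ) atTop (𝓝 (∫ ω, Z ω * Q ω ∂μ)) := by
    refine aux_closure μ E Q (fun n => (hEm n).aestronglyMeasurable) hQm.aestronglyMeasurable 1
      (fun n ω => (hEb n ω).le) hQb (fun K ω => (r K (L ω) : ℂ) * φ (L ω)) Z ?_ 1 ?_ hZ1 ?_ ?_
    · intro K
      exact ((Complex.measurable_ofReal.comp ((hrc K).measurable.comp hLm)).mul
        (hφc.measurable.comp hLm)).aestronglyMeasurable
    · intro K ω
      rw [norm_mul, hφ1, mul_one, Complex.norm_real]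
      exact hr01 _ _
    · refine ae_of_all _ fun ω => ?_
      by_cases h : L ω = 0
      · have e1 : Z ω = 0 := by simp [hZ, h]
        have e2 : ∀ K, r K (L ω) = 0 := by intro K; simp [hr, h]
        simp [e1, e2]
      · have e1 : Z ω = φ (L ω) := by simp [hZ, h]
        rw [e1]
        refine tendsto_const_nhds.congr' ?_
        have hpos : 0 < |L ω| := abs_pos.2 h
        have t1 : ∀ᶠ K : ℕ in atTop, |L ω| + 1 ≤ (K : ℝ) :=
          tendsto_natCast_atTop_atTop.eventually_ge_atTop _
        have t2 : ∀ᶠ K : ℕ in atTop, 1 / |L ω| ≤ (K : ℝ) :=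
          tendsto_natCast_atTop_atTop.eventually_ge_atTop _
        filter_upwards [t1, t2] with K h1 h2
        rw [div_le_iff₀ hpos] at h2
        have e3 : r K (L ω) = 1 := by
          simp only [hr]
          rw [min_eq_left h2, min_eq_left (by linarith), max_eq_right zero_le_one, mul_one]
        rw [e3]; simp
    · intro K
      exact aux_stable μ ℱ y e l L hLm b hb u ((K : ℝ) ^ 2) (by positivity) hy he hl hy1 he2 hmart
        hlL hq hq' (fun x => (r K x : ℂ) * φ x)
        ((Complex.continuous_ofReal.comp (hrc K)).mul hφc)
        (fun x => by
          rw [norm_mul, hφ1, mul_one, Complex.norm_real]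
          exact hr01 _ _)
        (fun x hx => by simp [hr0 K x hx])
  have eQ : ∫ ω, Z ω * Q ω ∂μ = ∫ ω in {ω | L ω ≠ 0}, φ (L ω) * Q ω ∂μ := by
    rw [← integral_indicator hA]
    refine integral_congr_ae (ae_of_all _ fun ω => ?_)
    by_cases h : L ω = 0 <;> simp [hZ, h]
  have eE : ∀ n, ∫ ω, Z ω * E n ω ∂μ = ∫ ω in {ω | L ω ≠ 0}, φ (L ω) * E n ω ∂μ := by
    intro n
    rw [← integral_indicator hA]
    refine integral_congr_ae (ae_of_all _ fun ω => ?_)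
    by_cases h : L ω = 0 <;> simp [hZ, h]
  rw [eQ] at hmain
  simp_rw [eE] at hmain
  set ψ : ℕ → Ω → ℂ := fun n ω => Complex.exp (Complex.I *
      ((-(u * s * √((∑ k ∈ range n, y k ω ^ 2) / b n)) : ℝ) : ℂ)) with hψ
  have hψ1 : ∀ n ω, ‖ψ n ω‖ = 1 := fun n ω => hexp1 _
  have hψm : ∀ n, Measurable (ψ n) := by
    intro n
    refine Complex.measurable_exp.comp (Measurable.const_mul (Complex.measurable_ofReal.comp ?_) _)
    have : Measurable fun ω => (∑ k ∈ range n, y k ω ^ 2) / b n :=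
      (Finset.measurable_fun_sum _ fun k _ => (hym k).pow_const 2).div_const _
    exact (this.sqrt.const_mul _).neg
  have hint1 : ∀ n, Integrable (fun ω => ψ n ω * E n ω) (μ.restrict {ω | L ω ≠ 0}) := by
    intro n
    refine Integrable.of_bound ((hψm n).mul (hEm n)).aestronglyMeasurable 1
      (ae_of_all _ fun ω => ?_)
    rw [norm_mul, hψ1, hEb, mul_one]
  have hint2 : ∀ n, Integrable (fun ω => φ (L ω) * E n ω) (μ.restrict {ω | L ω ≠ 0}) := by
    intro n
    refine Integrable.of_bound ((hφc.measurable.comp hLm).mul (hEm n)).aestronglyMeasurable 1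
      (ae_of_all _ fun ω => ?_)
    rw [norm_mul, hφ1, hEb, mul_one]
  have hdiff : Tendsto (fun n => ∫ ω in {ω | L ω ≠ 0}, (ψ n ω * E n ω - φ (L ω) * E n ω) ∂μ) atTop
      (𝓝 (∫ ω in {ω | L ω ≠ 0}, (0 : ℂ) ∂μ)) := by
    refine tendsto_integral_of_dominated_convergence (fun _ => 1 + 1) ?_ (integrable_const _) ?_ ?_
    · exact fun n => ((hint1 n).sub (hint2 n)).aestronglyMeasurable
    · intro n
      refine ae_of_all _ fun ω => (norm_sub_le _ _).trans ?_
      rw [norm_mul, norm_mul, hψ1, hEb, hφ1, mul_one]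
    · filter_upwards [ae_restrict_of_ae hq] with ω hω
      have h1 : Tendsto (fun n => ψ n ω) atTop (𝓝 (φ (L ω))) := by
        have h2 := (Real.continuous_sqrt.tendsto _).comp hω
        rw [Real.sqrt_sq_eq_abs] at h2
        exact (Complex.continuous_exp.tendsto _).comp
          (((Complex.continuous_ofReal.tendsto _).comp ((h2.const_mul (u * s)).neg)).const_mul _)
      have h3 := h1.sub_const (φ (L ω))
      rw [sub_self] at h3
      rw [tendsto_zero_iff_norm_tendsto_zero] at h3 ⊢
      refine h3.congr fun n => ?_
      rw [← sub_mul, norm_mul, hEb, mul_one]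
  rw [integral_zero] at hdiff
  have h4 := hdiff.add hmain
  rw [zero_add] at h4
  refine (tendsto_congr fun n => ?_).1 h4
  rw [integral_sub (hint1 n) (hint2 n), sub_add_cancel]
  refine integral_congr_ae (ae_of_all _ fun ω => ?_)
  simp only [hψ, hE]
  rw [← Complex.exp_add]
  congr 1
  push_cast
  ring

/-! ### From characteristic functions to coverage probabilities -/

lemma aux_weak {m0 : MeasurableSpace Ω} (ν : Measure Ω) [IsProbabilityMeasure ν]
    (L : Ω → ℝ) (hLm : Measurable L) (hL0 : ∀ᵐ ω ∂ν, L ω ≠ 0) (s : ℝ)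
    (D : ℕ → Ω → ℝ) (hD : ∀ n, Measurable (D n))
    (h : ∀ u : ℝ, Tendsto (fun n => ∫ ω, Complex.exp (Complex.I * ((u * D n ω : ℝ) : ℂ)) ∂ν) atTop
      (𝓝 (∫ ω, Complex.exp (Complex.I * ((-(u * s * |L ω|) : ℝ) : ℂ)) *
        Complex.exp (-(u ^ 2 * L ω ^ 2 / 2 : ℝ)) ∂ν))) :
    Tendsto (fun n => (ν {ω | D n ω ≤ 0}).toReal) atTop
        (𝓝 ((gaussianReal 0 1) (Set.Iic s)).toReal) ∧
      Tendsto (fun n => (ν {ω | D n ω < 0}).toReal) atTop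
        (𝓝 ((gaussianReal 0 1) (Set.Iic s)).toReal) := by
  have hgm : Measurable (fun z : Ω × ℝ => |L z.1| * (z.2 - s)) := by
    have h1 : Measurable (fun z : Ω × ℝ => |L z.1|) := (hLm.comp measurable_fst).abs
    exact h1.mul (measurable_snd.sub_const s)
  set lam : ProbabilityMeasure ℝ := ⟨(ν.prod (gaussianReal 0 1)).map
    (fun z : Ω × ℝ => |L z.1| * (z.2 - s)), Measure.isProbabilityMeasure_map hgm.aemeasurable⟩
    with hlam
  set P : ℕ → ProbabilityMeasure ℝ := fun n => ⟨ν.map (D n),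
    Measure.isProbabilityMeasure_map (hD n).aemeasurable⟩ with hP
  have hconv : Tendsto P atTop (𝓝 lam) := by
    refine ProbabilityMeasure.tendsto_iff_tendsto_charFun.2 fun u => ?_
    have e1 : ∀ n, charFun ((P n : ProbabilityMeasure ℝ) : Measure ℝ) u =
        ∫ ω, Complex.exp (Complex.I * ((u * D n ω : ℝ) : ℂ)) ∂ν := by
      intro n
      rw [charFun_apply_real]
      simp only [hP, ProbabilityMeasure.coe_mk]
      rw [integral_map (hD n).aemeasurable (by fun_prop)]
      refine integral_congr_ae (ae_of_all _ fun ω => ?_)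
      simp only
      congr 1
      push_cast
      ring
    have e2 : charFun (lam : Measure ℝ) u = ∫ ω, Complex.exp (Complex.I *
        ((-(u * s * |L ω|) : ℝ) : ℂ)) * Complex.exp (-(u ^ 2 * L ω ^ 2 / 2 : ℝ)) ∂ν := by
      rw [charFun_apply_real]
      simp only [hlam, ProbabilityMeasure.coe_mk]
      rw [integral_map hgm.aemeasurable (by fun_prop), integral_prod]
      · refine integral_congr_ae (ae_of_all _ fun ω => ?_)
        simp only
        have e3 : ∀ g : ℝ, Complex.exp ((u : ℂ) * ((|L ω| * (g - s) : ℝ) : ℂ) * Complex.I) =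
            Complex.exp (Complex.I * ((-(u * s * |L ω|) : ℝ) : ℂ)) *
              Complex.exp (((u * |L ω| : ℝ) : ℂ) * g * Complex.I) := by
          intro g
          rw [← Complex.exp_add]
          congr 1
          push_cast
          ring
        simp_rw [e3]
        rw [integral_const_mul, ← charFun_apply_real, charFun_gaussianReal]
        congr 2
        have : ((u * |L ω| : ℝ) : ℂ) ^ 2 = ((u ^ 2 * L ω ^ 2 : ℝ) : ℂ) := by
          rw [← Complex.ofReal_pow, mul_pow, sq_abs]
        rw [this]
        push_cast
        ring
      · refine Integrable.of_bound (C := 1) ?_ (ae_of_all _ fun z => ?_)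
        · refine Measurable.aestronglyMeasurable ?_
          exact Complex.measurable_exp.comp
            (((Complex.measurable_ofReal.comp hgm).const_mul _).mul_const _)
        · rw [← Complex.ofReal_mul, Complex.norm_exp_ofReal_mul_I]
    simp_rw [e1]
    rw [e2]
    exact h u
  have hL0' : ∀ᵐ z ∂(ν.prod (gaussianReal 0 1)), L z.1 ≠ 0 :=
    Measure.quasiMeasurePreserving_fst.ae hL0
  have hprod : ∀ B : Set ℝ, (ν.prod (gaussianReal 0 1)) {z : Ω × ℝ | z.2 ∈ B} =
      gaussianReal 0 1 B := by
    intro B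
    have : {z : Ω × ℝ | z.2 ∈ B} = Set.univ ×ˢ B := by ext z; simp
    rw [this, Measure.prod_prod, measure_univ, one_mul]
  have hna : ∀ x : ℝ, gaussianReal 0 1 {x} = 0 := by
    intro x
    have := nullSingletonClass_gaussianReal (μ := 0) (v := 1) one_ne_zero
    exact measure_singleton x
  have m0 : (lam : Measure ℝ) {0} = 0 := by
    simp only [hlam, ProbabilityMeasure.coe_mk]
    rw [Measure.map_apply hgm (measurableSet_singleton _), ← hna s, ← hprod]
    refine measure_congr ?_
    filter_upwards [hL0'] with z hz
    refine propext ?_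
    change |L z.1| * (z.2 - s) = 0 ↔ z.2 = s
    rw [mul_eq_zero, sub_eq_zero, abs_eq_zero]
    simp [hz]
  have m1 : (lam : Measure ℝ) (Set.Iic 0) = gaussianReal 0 1 (Set.Iic s) := by
    simp only [hlam, ProbabilityMeasure.coe_mk]
    rw [Measure.map_apply hgm measurableSet_Iic, ← hprod]
    refine measure_congr ?_
    filter_upwards [hL0'] with z hz
    refine propext ?_
    change |L z.1| * (z.2 - s) ≤ 0 ↔ z.2 ≤ s
    have : 0 < |L z.1| := abs_pos.2 hz
    constructor
    · intro h1
      by_contra h2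
      push Not at h2
      have : 0 < |L z.1| * (z.2 - s) := mul_pos this (by linarith)
      linarith
    · intro h1
      exact mul_nonpos_of_nonneg_of_nonpos this.le (by linarith)
  have m2 : (lam : Measure ℝ) (Set.Iio 0) = gaussianReal 0 1 (Set.Iic s) := by
    rw [← m1]
    refine le_antisymm (measure_mono Set.Iio_subset_Iic_self) ?_
    have : (Set.Iic 0 : Set ℝ) = Set.Iio 0 ∪ {0} := by
      ext x; simp [le_iff_lt_or_eq]
    rw [this]
    refine (measure_union_le _ _).trans ?_
    rw [m0, add_zero]
  have c1 := ProbabilityMeasure.tendsto_measure_of_null_frontier_of_tendsto' hconv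
    (E := Set.Iic 0) (by rw [frontier_Iic]; exact m0)
  have c2 := ProbabilityMeasure.tendsto_measure_of_null_frontier_of_tendsto' hconv
    (E := Set.Iio 0) (by rw [frontier_Iio]; exact m0)
  rw [m1] at c1
  rw [m2] at c2
  have d1 := (ENNReal.tendsto_toReal (measure_ne_top _ _)).comp c1
  have d2 := (ENNReal.tendsto_toReal (measure_ne_top _ _)).comp c2
  constructor
  · refine d1.congr fun n => ?_
    simp only [hP, ProbabilityMeasure.coe_mk, Function.comp]
    rw [Measure.map_apply (hD n) measurableSet_Iic]
    rfl
  · refine d2.congr fun n => ?_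
    simp only [hP, ProbabilityMeasure.coe_mk, Function.comp]
    rw [Measure.map_apply (hD n) measurableSet_Iio]
    rfl

lemma aux_gauss_symm (t : ℝ) : ((gaussianReal 0 1) (Set.Iic (-t))).toReal =
    1 - ((gaussianReal 0 1) (Set.Iic t)).toReal := by
  have := nullSingletonClass_gaussianReal (μ := 0) (v := 1) one_ne_zero
  have h1 : (gaussianReal 0 1) (Set.Iic (-t)) = (gaussianReal 0 1) (Set.Ici t) := by
    have h := gaussianReal_map_neg (μ := 0) (v := 1)
    rw [neg_zero] at h
    conv_lhs => rw [← h]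
    rw [Measure.map_apply measurable_neg measurableSet_Iic]
    congr 1
    ext x; simp
  have h2 : (Set.Ioi t) = (Set.Iic t)ᶜ := by ext x; simp
  rw [h1, ← measure_congr Ioi_ae_eq_Ici, h2]
  exact probReal_compl_eq_one_sub measurableSet_Iic

/-! ### Elephant random walk -/

lemma erwS_zero (X : ℕ → Ω → ℝ) (ω : Ω) : erwS X 0 ω = 0 := by simp [erwS]

lemma erwS_abs_le (X : ℕ → Ω → ℝ) (hX : ∀ n, 1 ≤ n → ∀ ω, X n ω = 1 ∨ X n ω = -1)
    (k : ℕ) (ω : Ω) : |erwS X k ω| ≤ k := by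
  unfold erwS
  refine (abs_sum_le_sum_abs _ _).trans ?_
  have : ∑ i ∈ Finset.Icc 1 k, |X i ω| ≤ ∑ i ∈ Finset.Icc 1 k, (1 : ℝ) := by
    refine sum_le_sum fun i hi => ?_
    rcases hX i (Finset.mem_Icc.1 hi).1 ω with h | h <;> simp [h]
  simpa using this

lemma aux_sum_Icc (f : ℕ → ℝ) (h0 : f 0 = 0) (n : ℕ) (hn : 1 ≤ n) :
    ∑ k ∈ Finset.Icc 1 (n - 1), f k = ∑ k ∈ range n, f k := by
  refine sum_subset ?_ ?_
  · intro k hk; rw [Finset.mem_Icc] at hk; rw [Finset.mem_range]; omega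
  · intro k hk hk'
    rw [Finset.mem_range] at hk; rw [Finset.mem_Icc] at hk'
    have : k = 0 := by omega
    rw [this, h0]

/-- Martingale increments of the elephant random walk. -/
def erwE (X : ℕ → Ω → ℝ) (p : ℝ) (k : ℕ) (ω : Ω) : ℝ :=
  if k = 0 then 0 else X (k + 1) ω - (2 * p - 1) * (erwS X k ω / k)

lemma aux_event (X : ℕ → Ω → ℝ) (hX : ∀ n, 1 ≤ n → ∀ ω, X n ω = 1 ∨ X n ω = -1) (p t : ℝ)
    (b : ℝ) (hb : 0 < b) (n : ℕ) (hn : 2 ≤ n) (ω : Ω) :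
    |erwPhat X n ω - p| ≤ t / Real.sqrt (erwV X n ω) ↔
      |(∑ k ∈ range n, erwS X k ω / k * erwE X p k ω) / √b| ≤
        t * √((∑ k ∈ range n, (erwS X k ω / k) ^ 2) / b) := by
  set A := ∑ k ∈ range n, (erwS X k ω / k) ^ 2 with hA
  set M := ∑ k ∈ range n, erwS X k ω / k * erwE X p k ω with hM
  have hApos : 0 < A := by
    have h1 : (erwS X 1 ω / (1 : ℕ)) ^ 2 ≤ A :=
      single_le_sum (f := fun k : ℕ => (erwS X k ω / k) ^ 2) (fun k _ => sq_nonneg _)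
        (Finset.mem_range.2 (by omega))
    have h2 : (erwS X 1 ω / (1 : ℕ)) ^ 2 = 1 := by
      rcases hX 1 le_rfl ω with h | h <;> simp [erwS, h]
    linarith
  have hV : erwV X n ω = 4 * A := by
    unfold erwV
    rw [aux_sum_Icc (fun k : ℕ => (erwS X k ω / k) ^ 2) (by simp) n (by omega)]
  have hPh : erwPhat X n ω - p = M / (2 * A) := by
    unfold erwPhat
    rw [aux_sum_Icc (fun k : ℕ => (erwS X k ω / k) ^ 2) (by simp) n (by omega),
      aux_sum_Icc (fun k : ℕ => (erwS X k ω / k) * (X (k + 1) ω + erwS X k ω / k)) (by simp) n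
        (by omega), ← hA]
    have : ∑ k ∈ range n, (erwS X k ω / k) * (X (k + 1) ω + erwS X k ω / k) = M + 2 * p * A := by
      rw [hM, hA, mul_sum, ← sum_add_distrib]
      refine sum_congr rfl fun k _ => ?_
      unfold erwE
      split_ifs with h
      · simp [h]
      · ring
    rw [this]
    field_simp
    ring
  have hs4 : √(4 * A) = 2 * √A := by
    rw [Real.sqrt_mul (by norm_num), show (4 : ℝ) = 2 ^ 2 by norm_num,
      Real.sqrt_sq (by norm_num)]
  have hsA : 0 < √A := Real.sqrt_pos.2 hApos
  have hsb : 0 < √b := Real.sqrt_pos.2 hb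
  rw [hPh, hV, hs4, Real.sqrt_div' _ hb.le, abs_div, abs_div, abs_of_pos (show 0 < 2 * A by linarith),
    abs_of_pos hsb, div_le_div_iff₀ (by linarith) (by linarith), ← mul_div_assoc,
    div_le_div_iff_of_pos_right hsb]
  have hAA : A = √A * √A := (Real.mul_self_sqrt hApos.le).symm
  constructor
  · intro h
    have : (2 * √A) * |M| ≤ (2 * √A) * (t * √A) := by
      calc (2 * √A) * |M| = |M| * (2 * √A) := by ring
        _ ≤ t * (2 * A) := h
        _ = (2 * √A) * (t * √A) := by nth_rewrite 1 [hAA]; ring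
    exact le_of_mul_le_mul_left this (by positivity)
  · intro h
    calc |M| * (2 * √A) ≤ t * √A * (2 * √A) := by gcongr
      _ = t * (2 * (√A * √A)) := by ring
      _ = t * (2 * A) := by rw [← hAA]

lemma aux_b_tendsto (p : ℝ) (hp : 3 / 4 < p) :
    Tendsto (fun n => ∑ k ∈ range n, (k : ℝ) ^ (2 * (2 * p - 1) - 2)) atTop atTop := by
  rw [← not_summable_iff_tendsto_nat_atTop_of_nonneg (fun k => by positivity),
    Real.summable_nat_rpow]
  linarith

lemma aux_y_sq (X : ℕ → Ω → ℝ) (p : ℝ) (k : ℕ) (ω : Ω) :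
    (erwS X k ω / k) ^ 2 = (erwS X k ω / (k : ℝ) ^ (2 * p - 1)) ^ 2 *
      (k : ℝ) ^ (2 * (2 * p - 1) - 2) := by
  rcases Nat.eq_zero_or_pos k with rfl | hk
  · simp [erwS_zero]
  · have hk' : (0 : ℝ) < k := by exact_mod_cast hk
    have h1 : (k : ℝ) ^ (2 * (2 * p - 1) - 2) = ((k : ℝ) ^ (2 * p - 1)) ^ 2 / (k : ℝ) ^ 2 := by
      rw [Real.rpow_sub hk', ← Real.rpow_natCast ((k : ℝ) ^ (2 * p - 1)) 2, ← Real.rpow_mul hk'.le]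
      norm_num
      congr 2
      ring
    rw [h1]
    have : (k : ℝ) ^ (2 * p - 1) ≠ 0 := (Real.rpow_pos_of_pos hk' _).ne'
    field_simp

lemma aux_y_zero (X : ℕ → Ω → ℝ) (p : ℝ) (hp' : p < 1) (ω : Ω) (c : ℝ)
    (h : Tendsto (fun n => erwS X n ω / (n : ℝ) ^ (2 * p - 1)) atTop (𝓝 c)) :
    Tendsto (fun k : ℕ => erwS X k ω / k) atTop (𝓝 0) := by
  have h1 : Tendsto (fun k : ℕ => (k : ℝ) ^ (-(2 - 2 * p))) atTop (𝓝 0) :=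
    (tendsto_rpow_neg_atTop (by linarith)).comp tendsto_natCast_atTop_atTop
  have h2 := h.mul h1
  rw [mul_zero] at h2
  refine h2.congr' ?_
  filter_upwards [eventually_gt_atTop 0] with k hk
  have hk' : (0 : ℝ) < k := by exact_mod_cast hk
  have e1 : -(2 - 2 * p) = (2 * p - 1) - 1 := by ring
  rw [e1, Real.rpow_sub_one hk'.ne' (2 * p - 1)]
  have : (k : ℝ) ^ (2 * p - 1) ≠ 0 := (Real.rpow_pos_of_pos hk' _).ne'
  field_simp

lemma aux_e_sq (X : ℕ → Ω → ℝ) (hX : ∀ n, 1 ≤ n → ∀ ω, X n ω = 1 ∨ X n ω = -1)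
    (p : ℝ) (ω : Ω)
    (h : Tendsto (fun k : ℕ => erwS X k ω / k) atTop (𝓝 0)) :
    Tendsto (fun k => erwE X p k ω ^ 2) atTop (𝓝 1) := by
  set a := 2 * p - 1 with ha
  have h1 : Tendsto (fun k : ℕ => 2 * |a| * |erwS X k ω / k| + a ^ 2 * |erwS X k ω / k| ^ 2) atTop
      (𝓝 0) := by
    have := (h.abs.const_mul (2 * |a|)).add ((h.abs.pow 2).const_mul (a ^ 2))
    simpa using this
  rw [← tendsto_sub_nhds_zero_iff]
  refine squeeze_zero_norm' ?_ h1
  filter_upwards [eventually_gt_atTop 0] with k hk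
  rw [erwE, if_neg hk.ne', Real.norm_eq_abs]
  set y := erwS X k ω / k
  have hx1 : X (k + 1) ω ^ 2 = 1 := by
    rcases hX (k + 1) (by omega) ω with h | h <;> simp [h]
  have hx2 : |X (k + 1) ω| = 1 := by
    rcases hX (k + 1) (by omega) ω with h | h <;> simp [h]
  have : (X (k + 1) ω - a * y) ^ 2 - 1 = -(2 * a * y * X (k + 1) ω) + a ^ 2 * y ^ 2 := by
    linear_combination hx1
  rw [this]
  refine (abs_add_le _ _).trans (le_of_eq ?_)
  rw [abs_neg, abs_mul, hx2, abs_mul, abs_mul, abs_mul, abs_of_nonneg (sq_nonneg a), abs_pow]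
  simp

/-- Asymptotic confidence interval in the superdiffusive regime `3/4 < p < 1`:
conditionally on `{L² > 0}`, the coverage probability of `[p̂_n ± t_{1-α/2}/√(V_n)]`
converges to `1 - α`. -/
theorem erw_confidence_interval_superdiffusive
    {m0 : MeasurableSpace Ω} (μ : Measure Ω) [IsProbabilityMeasure μ]
    (ℱ : Filtration ℕ m0) (X : ℕ → Ω → ℝ) (p : ℝ)
    (hERW : IsERW μ ℱ X p) (hp : 3 / 4 < p) (hp' : p < 1) (L : Ω → ℝ)
    (hL : ∀ᵐ ω ∂μ, Tendsto (fun n => erwS X n ω / (n : ℝ) ^ (2 * p - 1)) atTop (𝓝 (L ω)))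
    (hLpos : 0 < μ {ω | 0 < L ω ^ 2})
    (α t : ℝ) (hα : 0 < α) (hα' : α < 1)
    (ht : ((gaussianReal 0 1) (Set.Iic t)).toReal = 1 - α / 2) :
    Tendsto (fun n => ((μ[|{ω | 0 < L ω ^ 2}])
        {ω | |erwPhat X n ω - p| ≤ t / Real.sqrt (erwV X n ω)}).toReal)
      atTop (𝓝 (1 - α)) := by
  obtain ⟨hp0, hp1, hX, hXm, hXc⟩ := hERW
  -- measurable version of the limit
  have hSm : ∀ k, Measurable[ℱ k] (erwS X k) := by
    intro k
    refine Finset.measurable_fun_sum _ fun j hj => ?_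
    rw [Finset.mem_Icc] at hj
    exact (hXm j hj.1).mono (ℱ.mono hj.2) le_rfl
  have hlm : ∀ k, Measurable[ℱ k] (fun ω => erwS X k ω / (k : ℝ) ^ (2 * p - 1)) :=
    fun k => (hSm k).div_const _
  have hym : ∀ k, Measurable[ℱ k] (fun ω => erwS X k ω / k) := fun k => (hSm k).div_const _
  have hLae : AEMeasurable L μ :=
    aemeasurable_of_tendsto_metrizable_ae atTop
      (fun k => ((hlm k).mono (ℱ.le k) le_rfl).aemeasurable) hL
  set L' : Ω → ℝ := hLae.mk L with hL'
  have hL'm : Measurable L' := hLae.measurable_mk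
  have hLL' : L =ᵐ[μ] L' := hLae.ae_eq_mk
  have hlL : ∀ᵐ ω ∂μ, Tendsto (fun n => erwS X n ω / (n : ℝ) ^ (2 * p - 1)) atTop (𝓝 (L' ω)) := by
    filter_upwards [hL, hLL'] with ω h1 h2
    rwa [← h2]
  have hA : ({ω | 0 < L ω ^ 2} : Set Ω) =ᵐ[μ] {ω | L' ω ≠ 0} := by
    filter_upwards [hLL'] with ω h2
    refine propext ?_
    change 0 < L ω ^ 2 ↔ L' ω ≠ 0
    rw [h2]
    exact sq_pos_iff
  have hcond : μ[|{ω | 0 < L ω ^ 2}] = μ[|{ω | L' ω ≠ 0}] := by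
    unfold ProbabilityTheory.cond
    rw [measure_congr hA, Measure.restrict_congr_set hA]
  have hA0 : μ {ω | L' ω ≠ 0} ≠ 0 := by
    rw [← measure_congr hA]; exact hLpos.ne'
  have hAm : MeasurableSet {ω | L' ω ≠ 0} := hL'm (measurableSet_singleton (0 : ℝ)).compl
  rw [hcond]
  have hprob : IsProbabilityMeasure (μ[|{ω | L' ω ≠ 0}]) := cond_isProbabilityMeasure hA0
  have hL0 : ∀ᵐ ω ∂(μ[|{ω | L' ω ≠ 0}]), L' ω ≠ 0 := ae_cond_mem hAm
  -- ingredients of the central limit theorem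
  set b : ℕ → ℝ := fun n => ∑ k ∈ range n, (k : ℝ) ^ (2 * (2 * p - 1) - 2) with hbdef
  have hb : Tendsto b atTop atTop := aux_b_tendsto p hp
  have hy1 : ∀ (k : ℕ) ω, |erwS X k ω / k| ≤ 1 := by
    intro k ω
    rw [abs_div, abs_of_nonneg (Nat.cast_nonneg k : (0 : ℝ) ≤ (k : ℝ))]
    exact div_le_one_of_le₀ (erwS_abs_le X hX k ω) (Nat.cast_nonneg k)
  have he2 : ∀ k ω, |erwE X p k ω| ≤ 2 := by
    intro k ω
    unfold erwE
    split_ifs with h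
    · simp
    · refine (abs_sub _ _).trans ?_
      have h1 : |X (k + 1) ω| = 1 := by
        rcases hX (k + 1) (by omega) ω with h | h <;> simp [h]
      have h2 : |(2 * p - 1) * (erwS X k ω / k)| ≤ 1 := by
        rw [abs_mul]
        refine mul_le_one₀ ?_ (abs_nonneg _) (hy1 k ω)
        rw [abs_le]; constructor <;> linarith
      linarith
  have hem : ∀ k, Measurable[ℱ (k + 1)] (erwE X p k) := by
    intro k
    unfold erwE
    split_ifs with h
    · exact measurable_const
    · exact (hXm (k + 1) (by omega)).sub
        (((hym k).mono (ℱ.mono (Nat.le_succ k)) le_rfl).const_mul _)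
  have hmart : ∀ k, μ[erwE X p k | ℱ k] =ᵐ[μ] 0 := by
    intro k
    by_cases h : k = 0
    · have : erwE X p k = 0 := by funext ω; simp [erwE, h]
      rw [this, condExp_zero]
    · have e1 : erwE X p k = X (k + 1) - fun ω => (2 * p - 1) * (erwS X k ω / k) := by
        funext ω; simp [erwE, h]
      have i1 : Integrable (X (k + 1)) μ := by
        refine Integrable.of_bound
          ((hXm (k + 1) (by omega)).mono (ℱ.le _) le_rfl).aestronglyMeasurable 1
          (ae_of_all _ fun ω => ?_)
        rcases hX (k + 1) (by omega) ω with h | h <;> simp [h]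
      have m2 : Measurable[ℱ k] (fun ω => (2 * p - 1) * (erwS X k ω / k)) := (hym k).const_mul _
      have i2 : Integrable (fun ω => (2 * p - 1) * (erwS X k ω / k)) μ := by
        refine Integrable.const_mul ?_ _
        exact Integrable.of_bound ((hym k).mono (ℱ.le _) le_rfl).aestronglyMeasurable 1
          (ae_of_all _ fun ω => hy1 k ω)
      rw [e1]
      have h3 := condExp_sub i1 i2 (ℱ k)
      rw [condExp_of_stronglyMeasurable (ℱ.le k) m2.stronglyMeasurable i2] at h3
      filter_upwards [h3, hXc k (by omega)] with ω h4 h5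
      rw [h4, Pi.sub_apply, h5]
      simp
  have hq : ∀ᵐ ω ∂μ, Tendsto (fun n => (∑ k ∈ range n, (erwS X k ω / k) ^ 2) / b n) atTop
      (𝓝 (L' ω ^ 2)) := by
    filter_upwards [hlL] with ω hω
    refine (aux_toeplitz (fun k : ℕ => (k : ℝ) ^ (2 * (2 * p - 1) - 2))
      (fun k : ℕ => (erwS X k ω / (k : ℝ) ^ (2 * p - 1)) ^ 2) _ (fun k => by positivity) hb
      (hω.pow 2)).congr fun n => ?_
    simp_rw [aux_y_sq X p]
    rfl
  have hq' : ∀ᵐ ω ∂μ, Tendsto (fun n => (∑ k ∈ range n, (erwS X k ω / k * erwE X p k ω) ^ 2) / b n)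
      atTop (𝓝 (L' ω ^ 2)) := by
    filter_upwards [hlL] with ω hω
    have h1 := (hω.pow 2).mul (aux_e_sq X hX p ω (aux_y_zero X p hp' ω _ hω))
    rw [mul_one] at h1
    refine (aux_toeplitz (fun k : ℕ => (k : ℝ) ^ (2 * (2 * p - 1) - 2)) _ _
      (fun k => by positivity) hb h1).congr fun n => ?_
    congr 1
    refine sum_congr rfl fun k _ => ?_
    rw [mul_pow, aux_y_sq X p]
    ring
  set T : ℕ → Ω → ℝ := fun n ω => (∑ k ∈ range n, erwS X k ω / k * erwE X p k ω) / √(b n) with hT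
  set W : ℕ → Ω → ℝ := fun n ω => √((∑ k ∈ range n, (erwS X k ω / k) ^ 2) / b n) with hW
  have hTm : ∀ n, Measurable (T n) := by
    intro n
    exact (Finset.measurable_fun_sum _ fun k _ => ((hym k).mono (ℱ.le _) le_rfl).mul
      ((hem k).mono (ℱ.le _) le_rfl)).div_const _
  have hWm : ∀ n, Measurable (W n) := by
    intro n
    have : Measurable fun ω => (∑ k ∈ range n, (erwS X k ω / k) ^ 2) / b n :=
      (Finset.measurable_fun_sum _ fun k _ =>
        ((hym k).mono (ℱ.le _) le_rfl).pow_const 2).div_const _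
    exact this.sqrt
  have hweak := fun s : ℝ => aux_weak (μ[|{ω | L' ω ≠ 0}]) L' hL'm hL0 s
    (fun n ω => T n ω - s * W n ω) (fun n => (hTm n).sub ((hWm n).const_mul s)) (by
      intro u
      have h1 := aux_stable_ind μ ℱ (fun k ω => erwS X k ω / k) (erwE X p)
        (fun k ω => erwS X k ω / (k : ℝ) ^ (2 * p - 1)) L' hL'm b hb u s hym hem hlm hy1 he2 hmart
        hlL hq hq'
      simp only [ProbabilityTheory.cond, integral_smul_measure]
      exact h1.const_smul _)
  -- positivity of the quantile
  have hsymm := aux_gauss_symm t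
  have ht0 : 0 ≤ t := by
    by_contra hneg
    push Not at hneg
    have h1 : ((gaussianReal 0 1) (Set.Iic t)).toReal ≤ ((gaussianReal 0 1) (Set.Iic (-t))).toReal :=
      ENNReal.toReal_mono (measure_ne_top _ _)
        (measure_mono (Set.Iic_subset_Iic.2 (by linarith)))
    rw [hsymm, ht] at h1
    linarith
  have hlim := (hweak t).1.sub (hweak (-t)).2
  rw [hsymm, ht] at hlim
  have e0 : 1 - α / 2 - (1 - (1 - α / 2)) = 1 - α := by ring
  rw [e0] at hlim
  refine hlim.congr' ?_
  filter_upwards [eventually_ge_atTop 2, hb.eventually_gt_atTop 0] with n hn hbn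
  have hset : {ω | |erwPhat X n ω - p| ≤ t / Real.sqrt (erwV X n ω)} =
      {ω | T n ω - t * W n ω ≤ 0} \ {ω | T n ω - (-t) * W n ω < 0} := by
    ext ω
    rw [Set.mem_ofPred_eq, aux_event X hX p t (b n) hbn n hn ω, Set.mem_sdiff, Set.mem_ofPred_eq,
      Set.mem_ofPred_eq, not_lt, abs_le]
    change -(t * W n ω) ≤ T n ω ∧ T n ω ≤ t * W n ω ↔ _
    constructor
    · rintro ⟨h1, h2⟩; constructor <;> linarith
    · rintro ⟨h1, h2⟩; constructor <;> linarith
  rw [hset, measure_sdiff, ENNReal.toReal_sub_of_le _ (measure_ne_top _ _)]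
  · refine measure_mono fun ω hω => ?_
    have hWn : 0 ≤ t * W n ω := mul_nonneg ht0 (Real.sqrt_nonneg _)
    simp only [Set.mem_ofPred_eq] at hω ⊢
    linarith
  · intro ω hω
    have hWn : 0 ≤ t * W n ω := mul_nonneg ht0 (Real.sqrt_nonneg _)
    simp only [Set.mem_ofPred_eq] at hω ⊢
    linarith
  · exact (measurableSet_lt ((hTm n).sub ((hWm n).const_mul (-t))) measurable_const).nullMeasurableSet
  · exact measure_ne_top _ _
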